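/- Every degree-zero Z-algebra automorphism of the Z-algebra associated to the generalized Weyl algebra A(f), f = z(z+α) quadratic, is inner. -/

import Mathlib

open Polynomial

noncomputable section

/-- The defining relations of the generalized Weyl algebra `A(f)` over `k[z]` with
`σ(z) = z + 1`: `xz = σ(z)x`, `yz = σ⁻¹(z)y`, `xy = f`, `yx = σ⁻¹(f)`.
Generators: `0 ↦ x`, `1 ↦ y`, `2 ↦ z`. -/
inductive gwaRel (k : Type) [Field k] (f : Polynomial k) :
    FreeAlgebra k (Fin 3) → FreeAlgebra k (Fin 3) → Prop
  | xz : gwaRel k f (FreeAlgebra.ι k 0 * FreeAlgebra.ι k 2)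
      ((FreeAlgebra.ι k 2 + 1) * FreeAlgebra.ι k 0)
  | yz : gwaRel k f (FreeAlgebra.ι k 1 * FreeAlgebra.ι k 2)
      ((FreeAlgebra.ι k 2 - 1) * FreeAlgebra.ι k 1)
  | xy : gwaRel k f (FreeAlgebra.ι k 0 * FreeAlgebra.ι k 1)
      (aeval (FreeAlgebra.ι k 2) f)
  | yx : gwaRel k f (FreeAlgebra.ι k 1 * FreeAlgebra.ι k 0)
      (aeval (FreeAlgebra.ι k 2) (f.comp (X - 1)))

/-- The generalized Weyl algebra `A(f) = k[z]⟨x,y⟩ / (xz-σ(z)x, yz-σ⁻¹(z)y, xy-f, yx-σ⁻¹(f))`. -/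
abbrev GWA (k : Type) [Field k] (f : Polynomial k) := RingQuot (gwaRel k f)

def gwaX (k : Type) [Field k] (f : Polynomial k) : GWA k f :=
  RingQuot.mkAlgHom k (gwaRel k f) (FreeAlgebra.ι k 0)

def gwaY (k : Type) [Field k] (f : Polynomial k) : GWA k f :=
  RingQuot.mkAlgHom k (gwaRel k f) (FreeAlgebra.ι k 1)

def gwaZ (k : Type) [Field k] (f : Polynomial k) : GWA k f :=
  RingQuot.mkAlgHom k (gwaRel k f) (FreeAlgebra.ι k 2)

/-- The canonical `k[z]`-module generator of the degree-`n` component of `A(f)`: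
`xⁿ` for `n ≥ 0` and `y⁻ⁿ` for `n < 0`. -/
def gwaMon (k : Type) [Field k] (f : Polynomial k) (n : ℤ) : GWA k f :=
  if 0 ≤ n then gwaX k f ^ n.toNat else gwaY k f ^ (-n).toNat

/-- The degree-`n` component of `A(f)` (as a `k`-subspace): the left `k[z]`-span of the
canonical monomial `mₙ`.  The `(i,j)` component of the associated `ℤ`-algebra `Ā` is
`Ā_{i,j} = A_{j−i}`, and the `ℤ`-algebra multiplication `Ā_{i,j} × Ā_{j,l} → Ā_{i,l}`
is multiplication in `A`. -/
def gwaComp (k : Type) [Field k] (f : Polynomial k) (n : ℤ) : Submodule k (GWA k f) :=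
  Submodule.span k {w | ∃ q : Polynomial k, w = aeval (gwaZ k f) q * gwaMon k f n}

/-!
A degree-zero endomorphism `γ` of `Ā` acts on `Ā_{i,i} = k[z]` by a substitution `z ↦ Pᵢ(z)`, and
surjectivity makes `Pᵢ` affine. Surjectivity on `Ā_{i,i+1}` and `Ā_{i+1,i}` makes `γ` multiply `x`
and `y` by nonzero constants, so `xy = f` gives `f ∘ Pᵢ = c f`, while `xz = (z + 1)x` gives
`Pᵢ₊₁(z + 1) = Pᵢ(z) + 1`. The first relation says that `Pᵢ` fixes the centroid of the roots of `f`;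
the second, that `Pᵢ` and `Pᵢ₊₁` have the same slope. Hence `Pᵢ = Pᵢ₊₁` commutes with `z ↦ z + 1`
and has a fixed point, so it is the identity. Therefore `γ` is multiplication by a constant `cᵢⱼ` on
`Ā_{i,j}`. Products of the canonical monomials do not vanish, so `cᵢₗ = cᵢⱼ cⱼₗ`, and `gₘ = cₘ₀`,
`hₙ = c₀ₙ` exhibit `γ` as inner.
-/

section Polynomial

lemma semiconjBy_aeval {R A : Type*} [CommSemiring R] [Semiring A] [Algebra R A] {x a b : A}
    (h : SemiconjBy x a b) (p : R[X]) : SemiconjBy x (aeval a p) (aeval b p) := by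
  induction p using Polynomial.induction_on with
  | C r =>
    simp only [aeval_C]
    exact Algebra.commute_algebraMap_right r x
  | add p q hp hq => simpa only [map_add] using hp.add_right hq
  | monomial n r ih =>
    simpa only [pow_succ, ← mul_assoc, map_mul, aeval_X] using ih.mul_right h

lemma aeval_lmul_X {R : Type*} [CommSemiring R] (q : R[X]) :
    aeval (Algebra.lmul R R[X] X) q = Algebra.lmul R R[X] q := by
  rw [aeval_algHom_apply, aeval_X_left_apply]

lemma nextCoeff_taylor {R : Type*} [CommSemiring R] (r : R) (f : R[X]) :
    (taylor r f).nextCoeff = f.nextCoeff + f.natDegree * f.leadingCoeff * r := by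
  rcases hd : f.natDegree with _ | d
  · simp [nextCoeff, hd]
  · have hlin : (hasseDeriv d f).natDegree < 2 := by
      have := natDegree_hasseDeriv_le f d
      omega
    rw [nextCoeff_of_natDegree_pos (by simp [hd]), nextCoeff_of_natDegree_pos (by simp [hd]),
      leadingCoeff, natDegree_taylor, hd, Nat.add_sub_cancel, taylor_coeff,
      eval_eq_sum_range' hlin]
    simp [Finset.sum_range_succ, hasseDeriv_coeff, add_comm 1 d]

-- With `m = -nextCoeff f / (natDegree f * leadingCoeff f)` the centroid of the roots of `f`, the
-- conclusion reads `a * m + b = m`.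
lemma natDegree_mul_leadingCoeff_mul_eq_of_comp_affine_eq {R : Type*} [CommRing R] [IsDomain R]
    {f : R[X]} {a b c : R} (ha : a ≠ 0) (h : f.comp (C a * X + C b) = C c * f) :
    f.natDegree * f.leadingCoeff * b = (a - 1) * f.nextCoeff := by
  rcases hd : f.natDegree with _ | d
  · simp [nextCoeff, hd]
  · have hcoeff (n : ℕ) : (taylor b f).coeff n * a ^ n = c * f.coeff n := by
      rw [← coeff_C_mul, ← h, ← comp_C_mul_X_coeff, taylor_apply, comp_assoc]
      simp
    have hlead : f.leadingCoeff ≠ 0 := leadingCoeff_ne_zero.2 fun h => by simp [h] at hd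
    have hc : a ^ (d + 1) = c := by
      have htop := hcoeff f.natDegree
      rw [coeff_taylor_natDegree, coeff_natDegree, hd, mul_comm] at htop
      exact mul_right_cancel₀ hlead htop
    have hnext : (taylor b f).nextCoeff = a * f.nextCoeff := by
      have hsub := hcoeff d
      rw [← hc] at hsub
      rw [nextCoeff_of_natDegree_pos (by simp [hd]), nextCoeff_of_natDegree_pos (by simp [hd]),
        natDegree_taylor, hd, Nat.add_sub_cancel]
      refine mul_right_cancel₀ (pow_ne_zero d ha) ?_
      linear_combination hsub
    rw [nextCoeff_taylor, hd] at hnext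
    linear_combination hnext

lemma exists_eq_affine_of_comp_eq_X {R : Type*} [Semiring R] [NoZeroDivisors R] [Nontrivial R]
    {p q : R[X]} (h : q.comp p = X) : ∃ a b : R, a ≠ 0 ∧ p = C a * X + C b := by
  have hdeg : q.natDegree * p.natDegree = 1 := by rw [← natDegree_comp, h, natDegree_X]
  obtain ⟨a, ha, b, hab⟩ := natDegree_eq_one.1 (Nat.eq_one_of_mul_eq_one_left hdeg)
  exact ⟨a, b, ha, hab.symm⟩

lemma affine_eq_X_of_comp_X_add_one_eq {R : Type*} [CommRing R] [IsDomain R] {f : R[X]}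
    (hf : (f.natDegree : R) ≠ 0) {a b a' b' c c' : R} (ha : a ≠ 0)
    (hshift : (C a' * X + C b').comp (X + 1) = C a * X + C b + 1)
    (h : f.comp (C a * X + C b) = C c * f) (h' : f.comp (C a' * X + C b') = C c' * f) :
    C a * X + C b = X := by
  have hslope : a' = a := by simpa [coeff_one] using congrArg (coeff · 1) hshift
  subst hslope
  have hconst : a' + b' = b + 1 := by
    simpa [coeff_one] using congrArg (coeff · 0) hshift
  have hlead : f.leadingCoeff ≠ 0 := leadingCoeff_ne_zero.2 fun h => hf (by simp [h])
  have hcentroid := natDegree_mul_leadingCoeff_mul_eq_of_comp_affine_eq ha h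
  have hcentroid' := natDegree_mul_leadingCoeff_mul_eq_of_comp_affine_eq ha h'
  have hb : b' = b := mul_left_cancel₀ (mul_ne_zero hf hlead) (hcentroid'.trans hcentroid.symm)
  have ha_one : a' = 1 := by linear_combination hconst - hb
  have hb_zero : b = 0 := by simpa [ha_one, hf, hlead] using hcentroid
  simp [ha_one, hb_zero]

end Polynomial

section Representation

variable (k : Type) [Field k] (f : k[X])

/-- The representation of `A(f)` on `k[z]` in which `z` acts by multiplication, `x` by the shift
`p(z) ↦ p(z + 1)` and `y` by `p(z) ↦ f(z - 1) p(z - 1)`. It serves to show that products of the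
canonical monomials do not vanish. -/
def gwaRep : GWA k f →ₐ[k] Module.End k k[X] :=
  RingQuot.liftAlgHom k ⟨FreeAlgebra.lift k
    ![taylor 1, Algebra.lmul k k[X] (f.comp (X - 1)) * taylor (-1), Algebra.lmul k k[X] X], by
    intro a b h
    cases h <;> refine LinearMap.ext fun p => ?_ <;>
      simp only [← aeval_algHom_apply, map_mul, map_add, map_sub, map_one,
        FreeAlgebra.lift_ι_apply, Matrix.cons_val, aeval_lmul_X] <;>
      simp [taylor_apply, comp_assoc, add_mul, mul_add, mul_left_comm, sub_eq_add_neg]⟩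

lemma gwaRep_gwaX : gwaRep k f (gwaX k f) = taylor 1 := by
  simp [gwaRep, gwaX]

lemma gwaRep_gwaY :
    gwaRep k f (gwaY k f) = Algebra.lmul k k[X] (f.comp (X - 1)) * taylor (-1) := by
  simp [gwaRep, gwaY]

lemma gwaRep_gwaZ : gwaRep k f (gwaZ k f) = Algebra.lmul k k[X] X := by
  simp [gwaRep, gwaZ]

lemma gwaRep_aeval_gwaZ (q : k[X]) : gwaRep k f (aeval (gwaZ k f) q) = Algebra.lmul k k[X] q := by
  rw [← aeval_algHom_apply, gwaRep_gwaZ, aeval_lmul_X]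

end Representation

section GWA

variable {k : Type} [Field k] {f : k[X]}

lemma semiconjBy_gwaX_gwaZ : SemiconjBy (gwaX k f) (gwaZ k f) (gwaZ k f + 1) := by
  simpa [gwaX, gwaZ, SemiconjBy] using RingQuot.mkAlgHom_rel k (gwaRel.xz (k := k) (f := f))

lemma semiconjBy_gwaY_gwaZ : SemiconjBy (gwaY k f) (gwaZ k f) (gwaZ k f - 1) := by
  simpa [gwaY, gwaZ, SemiconjBy] using RingQuot.mkAlgHom_rel k (gwaRel.yz (k := k) (f := f))

lemma gwaX_mul_gwaY : gwaX k f * gwaY k f = aeval (gwaZ k f) f := by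
  have hrel := RingQuot.mkAlgHom_rel k (gwaRel.xy (k := k) (f := f))
  rwa [map_mul, ← aeval_algHom_apply] at hrel

lemma gwaY_mul_gwaX : gwaY k f * gwaX k f = aeval (gwaZ k f) (f.comp (X - 1)) := by
  have hrel := RingQuot.mkAlgHom_rel k (gwaRel.yx (k := k) (f := f))
  rwa [map_mul, ← aeval_algHom_apply] at hrel

lemma gwaX_mul_aeval (q : k[X]) :
    gwaX k f * aeval (gwaZ k f) q = aeval (gwaZ k f) (q.comp (X + 1)) * gwaX k f := by
  simpa [aeval_comp] using (semiconjBy_aeval semiconjBy_gwaX_gwaZ q).eq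

lemma gwaY_mul_aeval (q : k[X]) :
    gwaY k f * aeval (gwaZ k f) q = aeval (gwaZ k f) (q.comp (X - 1)) * gwaY k f := by
  simpa [aeval_comp] using (semiconjBy_aeval semiconjBy_gwaY_gwaZ q).eq

lemma gwaMon_natCast (n : ℕ) : gwaMon k f n = gwaX k f ^ n := by simp [gwaMon]

lemma gwaMon_neg_natCast (n : ℕ) : gwaMon k f (-n) = gwaY k f ^ n := by
  rcases n with _ | n
  · simp [gwaMon]
  · rw [gwaMon, if_neg (by omega)]; simp

lemma gwaMon_zero : gwaMon k f 0 = 1 := by simp [gwaMon]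

lemma gwaMon_one : gwaMon k f 1 = gwaX k f := by simp [gwaMon]

lemma gwaMon_neg_one : gwaMon k f (-1) = gwaY k f := by simp [gwaMon]

lemma mem_gwaComp {n : ℤ} {w : GWA k f} :
    w ∈ gwaComp k f n ↔ ∃ q : k[X], w = aeval (gwaZ k f) q * gwaMon k f n := by
  refine ⟨fun hw => ?_, fun hw => Submodule.subset_span hw⟩
  induction hw using Submodule.span_induction with
  | mem _ hw => exact hw
  | zero => exact ⟨0, by simp⟩
  | add _ _ _ _ hv hw =>
    obtain ⟨p, rfl⟩ := hv
    obtain ⟨q, rfl⟩ := hw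
    exact ⟨p + q, by simp [add_mul]⟩
  | smul c _ _ hw =>
    obtain ⟨p, rfl⟩ := hw
    exact ⟨c • p, by simp⟩

lemma gwaMon_mem_gwaComp (n : ℤ) : gwaMon k f n ∈ gwaComp k f n :=
  mem_gwaComp.2 ⟨1, by simp⟩

lemma aeval_gwaZ_mul_mem_gwaComp (q : k[X]) {n : ℤ} {w : GWA k f} (hw : w ∈ gwaComp k f n) :
    aeval (gwaZ k f) q * w ∈ gwaComp k f n := by
  obtain ⟨p, rfl⟩ := mem_gwaComp.1 hw
  exact mem_gwaComp.2 ⟨q * p, by rw [map_mul, mul_assoc]⟩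

lemma mem_gwaComp_zero {w : GWA k f} :
    w ∈ gwaComp k f 0 ↔ ∃ q : k[X], w = aeval (gwaZ k f) q := by
  simp only [mem_gwaComp, gwaMon_zero, mul_one]

lemma aeval_gwaZ_mem_gwaComp_sub_self (i : ℤ) (q : k[X]) :
    aeval (gwaZ k f) q ∈ gwaComp k f (i - i) := by
  rw [sub_self]
  exact mem_gwaComp_zero.2 ⟨q, rfl⟩

lemma gwaZ_mem_gwaComp_sub_self (i : ℤ) : gwaZ k f ∈ gwaComp k f (i - i) := by
  simpa using aeval_gwaZ_mem_gwaComp_sub_self i (X : k[X])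

lemma gwaX_mem_gwaComp_succ_sub (i : ℤ) : gwaX k f ∈ gwaComp k f (i + 1 - i) := by
  simpa [gwaMon_one] using gwaMon_mem_gwaComp (k := k) (f := f) 1

lemma gwaY_mem_gwaComp_sub_succ (i : ℤ) : gwaY k f ∈ gwaComp k f (i - (i + 1)) := by
  simpa [gwaMon_neg_one] using gwaMon_mem_gwaComp (k := k) (f := f) (-1)

lemma gwaX_mul_mem_gwaComp {n : ℤ} {w : GWA k f} (hw : w ∈ gwaComp k f n) :
    gwaX k f * w ∈ gwaComp k f (n + 1) := by
  obtain ⟨q, rfl⟩ := mem_gwaComp.1 hw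
  rw [← mul_assoc, gwaX_mul_aeval, mul_assoc]
  apply aeval_gwaZ_mul_mem_gwaComp
  obtain ⟨m, rfl | rfl⟩ := n.eq_nat_or_neg
  · rw [gwaMon_natCast, ← pow_succ', ← gwaMon_natCast]
    exact gwaMon_mem_gwaComp _
  · rcases m with _ | m
    · simpa [gwaMon_zero, gwaMon_one] using gwaMon_mem_gwaComp (k := k) (f := f) 1
    · rw [show -((m + 1 : ℕ) : ℤ) + 1 = -m by push_cast; ring, gwaMon_neg_natCast, pow_succ',
        ← mul_assoc, gwaX_mul_gwaY, ← gwaMon_neg_natCast]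
      exact aeval_gwaZ_mul_mem_gwaComp f (gwaMon_mem_gwaComp _)

lemma gwaY_mul_mem_gwaComp {n : ℤ} {w : GWA k f} (hw : w ∈ gwaComp k f n) :
    gwaY k f * w ∈ gwaComp k f (n - 1) := by
  obtain ⟨q, rfl⟩ := mem_gwaComp.1 hw
  rw [← mul_assoc, gwaY_mul_aeval, mul_assoc]
  apply aeval_gwaZ_mul_mem_gwaComp
  obtain ⟨m, rfl | rfl⟩ := n.eq_nat_or_neg
  · rcases m with _ | m
    · simpa [gwaMon_zero, gwaMon_neg_one] using gwaMon_mem_gwaComp (k := k) (f := f) (-1)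
    · rw [show ((m + 1 : ℕ) : ℤ) - 1 = m by push_cast; ring, gwaMon_natCast, pow_succ',
        ← mul_assoc, gwaY_mul_gwaX, ← gwaMon_natCast]
      exact aeval_gwaZ_mul_mem_gwaComp _ (gwaMon_mem_gwaComp _)
  · rw [show -(m : ℤ) - 1 = -((m + 1 : ℕ) : ℤ) by push_cast; ring, gwaMon_neg_natCast,
      ← pow_succ', ← gwaMon_neg_natCast]
    exact gwaMon_mem_gwaComp _

lemma gwaMon_mul_mem_gwaComp (m : ℤ) {n : ℤ} {w : GWA k f} (hw : w ∈ gwaComp k f n) :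
    gwaMon k f m * w ∈ gwaComp k f (m + n) := by
  obtain ⟨a, rfl | rfl⟩ := m.eq_nat_or_neg
  · rw [gwaMon_natCast]
    induction a with
    | zero => simpa using hw
    | succ a ih =>
      rw [pow_succ', mul_assoc, show ((a + 1 : ℕ) : ℤ) + n = a + n + 1 by push_cast; ring]
      exact gwaX_mul_mem_gwaComp ih
  · rw [gwaMon_neg_natCast]
    induction a with
    | zero => simpa using hw
    | succ a ih =>
      rw [pow_succ', mul_assoc, show -((a + 1 : ℕ) : ℤ) + n = -a + n - 1 by push_cast; ring]
      exact gwaY_mul_mem_gwaComp ih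

lemma gwaRep_gwaMon_injective (hf : f ≠ 0) (n : ℤ) :
    Function.Injective (gwaRep k f (gwaMon k f n)) := by
  obtain ⟨a, rfl | rfl⟩ := n.eq_nat_or_neg
  · rw [gwaMon_natCast, map_pow, Module.End.coe_pow, gwaRep_gwaX]
    exact (taylor_injective 1).iterate a
  · rw [gwaMon_neg_natCast, map_pow, Module.End.coe_pow, gwaRep_gwaY]
    have hf' : f.comp (X - 1) ≠ 0 := by
      simpa [sub_eq_add_neg] using (comp_X_add_C_ne_zero_iff (t := -1)).2 hf
    exact ((mul_right_injective₀ hf').comp (taylor_injective (-1))).iterate a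

lemma aeval_mul_gwaMon_injective (hf : f ≠ 0) (n : ℤ) :
    Function.Injective fun q : k[X] => aeval (gwaZ k f) q * gwaMon k f n := by
  intro p q h
  have hrep : p * gwaRep k f (gwaMon k f n) 1 = q * gwaRep k f (gwaMon k f n) 1 := by
    simpa [gwaRep_aeval_gwaZ] using congrArg (gwaRep k f · 1) h
  have hne : gwaRep k f (gwaMon k f n) 1 ≠ 0 :=
    (map_ne_zero_iff _ (gwaRep_gwaMon_injective hf n)).2 one_ne_zero
  exact mul_right_cancel₀ hne hrep

lemma aeval_gwaZ_injective (hf : f ≠ 0) : Function.Injective (aeval (R := k) (gwaZ k f)) := by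
  simpa [gwaMon_zero] using aeval_mul_gwaMon_injective hf 0

lemma gwaMon_mul_gwaMon_ne_zero (hf : f ≠ 0) (m n : ℤ) : gwaMon k f m * gwaMon k f n ≠ 0 := by
  intro h
  have hinj := (gwaRep_gwaMon_injective hf m).comp (gwaRep_gwaMon_injective hf n)
  rw [← Module.End.coe_mul, ← map_mul, h, map_zero] at hinj
  exact one_ne_zero (hinj (a₁ := (1 : k[X])) (a₂ := 0) rfl)

end GWA

/-- A surjective degree-zero endomorphism of the `ℤ`-algebra `Ā` of `A(f)`: a family of `k`-linear
surjections `γ i j` of `Ā_{i,j} = A_{j-i}` onto itself, compatible with products and local units.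
Each `γ i j` is a function on all of `A(f)` whose values outside `A_{j-i}` are irrelevant. -/
structure IsSurjectiveZAlgebraEnd {k : Type} [Field k] {f : k[X]}
    (γ : ℤ → ℤ → GWA k f → GWA k f) : Prop where
  mapsTo (i j : ℤ) : Set.MapsTo (γ i j) (gwaComp k f (j - i)) (gwaComp k f (j - i))
  surjOn (i j : ℤ) : Set.SurjOn (γ i j) (gwaComp k f (j - i)) (gwaComp k f (j - i))
  map_add {i j : ℤ} {w v : GWA k f} (hw : w ∈ gwaComp k f (j - i)) (hv : v ∈ gwaComp k f (j - i)) :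
    γ i j (w + v) = γ i j w + γ i j v
  map_smul {i j : ℤ} {w : GWA k f} (hw : w ∈ gwaComp k f (j - i)) (t : k) :
    γ i j (t • w) = t • γ i j w
  map_mul {i j l : ℤ} {w v : GWA k f} (hw : w ∈ gwaComp k f (j - i))
    (hv : v ∈ gwaComp k f (l - j)) : γ i l (w * v) = γ i j w * γ j l v
  map_one (i : ℤ) : γ i i 1 = 1

namespace IsSurjectiveZAlgebraEnd

variable {k : Type} [Field k] {f : k[X]} {γ : ℤ → ℤ → GWA k f → GWA k f}

lemma map_aeval_gwaZ (hγ : IsSurjectiveZAlgebraEnd γ) (i : ℤ) (q : k[X]) :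
    γ i i (aeval (gwaZ k f) q) = aeval (γ i i (gwaZ k f)) q := by
  induction q using Polynomial.induction_on with
  | C r =>
    have hone : (1 : GWA k f) ∈ gwaComp k f (i - i) := by
      simpa using aeval_gwaZ_mem_gwaComp_sub_self i (1 : k[X])
    simp only [aeval_C, Algebra.algebraMap_eq_smul_one, hγ.map_smul hone, hγ.map_one]
  | add p q hp hq =>
    rw [_root_.map_add, hγ.map_add (aeval_gwaZ_mem_gwaComp_sub_self i p)
      (aeval_gwaZ_mem_gwaComp_sub_self i q), hp, hq, _root_.map_add]
  | monomial n r ih =>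
    rw [pow_succ, ← mul_assoc, _root_.map_mul, aeval_X,
      hγ.map_mul (aeval_gwaZ_mem_gwaComp_sub_self i _) (gwaZ_mem_gwaComp_sub_self i), ih,
      _root_.map_mul _ _ X, aeval_X]

lemma map_aeval_gwaZ_eq_comp (hγ : IsSurjectiveZAlgebraEnd γ) {i : ℤ} {p : k[X]}
    (hp : γ i i (gwaZ k f) = aeval (gwaZ k f) p) (q : k[X]) :
    γ i i (aeval (gwaZ k f) q) = aeval (gwaZ k f) (q.comp p) := by
  rw [hγ.map_aeval_gwaZ, hp, aeval_comp]

lemma exists_map_gwaZ_eq_affine (hγ : IsSurjectiveZAlgebraEnd γ) (hf : f ≠ 0) (i : ℤ) :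
    ∃ a b : k, a ≠ 0 ∧ γ i i (gwaZ k f) = aeval (gwaZ k f) (C a * X + C b) := by
  have hz : gwaZ k f ∈ gwaComp k f (i - i) := gwaZ_mem_gwaComp_sub_self i
  have himage := hγ.mapsTo i i hz
  obtain ⟨w, hw, hwz⟩ := hγ.surjOn i i hz
  rw [sub_self, SetLike.mem_coe, mem_gwaComp_zero] at himage hw
  obtain ⟨p, hp⟩ := himage
  obtain ⟨q, rfl⟩ := hw
  rw [hγ.map_aeval_gwaZ_eq_comp hp] at hwz
  have hcomp : q.comp p = X := aeval_gwaZ_injective hf (by rw [hwz, aeval_X])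
  obtain ⟨a, b, ha, rfl⟩ := exists_eq_affine_of_comp_eq_X hcomp
  exact ⟨a, b, ha, hp⟩

lemma exists_map_gwaMon_eq_smul (hγ : IsSurjectiveZAlgebraEnd γ) (hf : f ≠ 0) (i j : ℤ) :
    ∃ c : k, c ≠ 0 ∧ γ i j (gwaMon k f (j - i)) = c • gwaMon k f (j - i) := by
  have hmon : gwaMon k f (j - i) ∈ gwaComp k f (j - i) := gwaMon_mem_gwaComp _
  obtain ⟨a, b, -, hp⟩ := hγ.exists_map_gwaZ_eq_affine hf i
  obtain ⟨u, hu⟩ := mem_gwaComp.1 (hγ.mapsTo i j hmon)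
  obtain ⟨w, hw, hwm⟩ := hγ.surjOn i j hmon
  obtain ⟨q, rfl⟩ := mem_gwaComp.1 hw
  rw [hγ.map_mul (aeval_gwaZ_mem_gwaComp_sub_self i q) hmon, hγ.map_aeval_gwaZ_eq_comp hp,
    hu, ← mul_assoc, ← _root_.map_mul] at hwm
  have hmul_one : q.comp (C a * X + C b) * u = 1 :=
    aeval_mul_gwaMon_injective hf (j - i) (by simpa using hwm)
  obtain ⟨c, hc, rfl⟩ := Polynomial.isUnit_iff.1 (IsUnit.of_mul_eq_one_right _ hmul_one)
  exact ⟨c, hc.ne_zero, by rw [hu, aeval_C, Algebra.smul_def]⟩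

lemma exists_map_gwaX_eq_smul (hγ : IsSurjectiveZAlgebraEnd γ) (hf : f ≠ 0) (i : ℤ) :
    ∃ c : k, c ≠ 0 ∧ γ i (i + 1) (gwaX k f) = c • gwaX k f := by
  simpa [gwaMon_one] using hγ.exists_map_gwaMon_eq_smul hf i (i + 1)

lemma exists_map_gwaY_eq_smul (hγ : IsSurjectiveZAlgebraEnd γ) (hf : f ≠ 0) (i : ℤ) :
    ∃ c : k, c ≠ 0 ∧ γ (i + 1) i (gwaY k f) = c • gwaY k f := by
  simpa [gwaMon_neg_one] using hγ.exists_map_gwaMon_eq_smul hf (i + 1) i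

lemma comp_X_add_one_eq (hγ : IsSurjectiveZAlgebraEnd γ) (hf : f ≠ 0) {i : ℤ} {p p' : k[X]}
    (hp : γ i i (gwaZ k f) = aeval (gwaZ k f) p)
    (hp' : γ (i + 1) (i + 1) (gwaZ k f) = aeval (gwaZ k f) p') :
    p'.comp (X + 1) = p + 1 := by
  obtain ⟨c, hc, hx⟩ := hγ.exists_map_gwaX_eq_smul hf i
  have hxz : γ i (i + 1) (gwaX k f * aeval (gwaZ k f) (X : k[X])) =
      c • (aeval (gwaZ k f) (p'.comp (X + 1)) * gwaX k f) := by
    rw [hγ.map_mul (gwaX_mem_gwaComp_succ_sub i) (aeval_gwaZ_mem_gwaComp_sub_self (i + 1) X), hx,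
      hγ.map_aeval_gwaZ_eq_comp hp', X_comp, smul_mul_assoc, gwaX_mul_aeval]
  have hzx : γ i (i + 1) (aeval (gwaZ k f) (X + 1 : k[X]) * gwaX k f) =
      c • (aeval (gwaZ k f) (p + 1) * gwaX k f) := by
    rw [hγ.map_mul (aeval_gwaZ_mem_gwaComp_sub_self i (X + 1)) (gwaX_mem_gwaComp_succ_sub i), hx,
      hγ.map_aeval_gwaZ_eq_comp hp, add_comp, X_comp, one_comp, mul_smul_comm]
  rw [gwaX_mul_aeval, X_comp, hzx, ← gwaMon_one] at hxz
  exact (aeval_mul_gwaMon_injective hf 1 (smul_right_injective (GWA k f) hc hxz)).symm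

lemma exists_comp_eq_C_mul (hγ : IsSurjectiveZAlgebraEnd γ) (hf : f ≠ 0) {i : ℤ} {p : k[X]}
    (hp : γ i i (gwaZ k f) = aeval (gwaZ k f) p) : ∃ c : k, f.comp p = C c * f := by
  obtain ⟨c, -, hx⟩ := hγ.exists_map_gwaX_eq_smul hf i
  obtain ⟨d, -, hy⟩ := hγ.exists_map_gwaY_eq_smul hf i
  refine ⟨c * d, aeval_gwaZ_injective hf ?_⟩
  calc aeval (gwaZ k f) (f.comp p)
      = γ i i (gwaX k f * gwaY k f) := by rw [gwaX_mul_gwaY, hγ.map_aeval_gwaZ_eq_comp hp]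
    _ = (c • gwaX k f) * (d • gwaY k f) := by
        rw [hγ.map_mul (gwaX_mem_gwaComp_succ_sub i) (gwaY_mem_gwaComp_sub_succ i), hx, hy]
    _ = aeval (gwaZ k f) (C (c * d) * f) := by
        rw [smul_mul_smul_comm, gwaX_mul_gwaY, C_mul', _root_.map_smul]

lemma map_gwaZ (hγ : IsSurjectiveZAlgebraEnd γ) (hf : (f.natDegree : k) ≠ 0) (i : ℤ) :
    γ i i (gwaZ k f) = gwaZ k f := by
  have hf₀ : f ≠ 0 := fun h => hf (by simp [h])
  obtain ⟨a, b, ha, hp⟩ := hγ.exists_map_gwaZ_eq_affine hf₀ i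
  obtain ⟨a', b', -, hp'⟩ := hγ.exists_map_gwaZ_eq_affine hf₀ (i + 1)
  obtain ⟨c, hc⟩ := hγ.exists_comp_eq_C_mul hf₀ hp
  obtain ⟨c', hc'⟩ := hγ.exists_comp_eq_C_mul hf₀ hp'
  rw [hp, affine_eq_X_of_comp_X_add_one_eq hf ha (hγ.comp_X_add_one_eq hf₀ hp hp') hc hc', aeval_X]

lemma exists_map_eq_smul (hγ : IsSurjectiveZAlgebraEnd γ) (hf : (f.natDegree : k) ≠ 0)
    (i j : ℤ) : ∃ c : k, ∀ w ∈ gwaComp k f (j - i), γ i j w = c • w := by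
  have hf₀ : f ≠ 0 := fun h => hf (by simp [h])
  obtain ⟨c, -, hc⟩ := hγ.exists_map_gwaMon_eq_smul hf₀ i j
  refine ⟨c, fun w hw => ?_⟩
  obtain ⟨q, rfl⟩ := mem_gwaComp.1 hw
  rw [hγ.map_mul (aeval_gwaZ_mem_gwaComp_sub_self i q) (gwaMon_mem_gwaComp _),
    hγ.map_aeval_gwaZ, hγ.map_gwaZ hf, hc, mul_smul_comm]

lemma eq_mul_of_map_eq_smul (hγ : IsSurjectiveZAlgebraEnd γ) (hf : f ≠ 0) {c : ℤ → ℤ → k}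
    (hc : ∀ i j, ∀ w ∈ gwaComp k f (j - i), γ i j w = c i j • w) (i j l : ℤ) :
    c i l = c i j * c j l := by
  have hij : gwaMon k f (j - i) ∈ gwaComp k f (j - i) := gwaMon_mem_gwaComp _
  have hjl : gwaMon k f (l - j) ∈ gwaComp k f (l - j) := gwaMon_mem_gwaComp _
  have hil : gwaMon k f (j - i) * gwaMon k f (l - j) ∈ gwaComp k f (l - i) := by
    simpa using gwaMon_mul_mem_gwaComp (j - i) hjl
  have hmul := hγ.map_mul hij hjl
  rw [hc i l _ hil, hc i j _ hij, hc j l _ hjl, smul_mul_smul_comm] at hmul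
  exact smul_left_injective k (gwaMon_mul_gwaMon_ne_zero hf _ _) hmul

end IsSurjectiveZAlgebraEnd

theorem zAlgebra_automorphism_inner_general {k : Type} [Field k] {f : k[X]}
    (hf : (f.natDegree : k) ≠ 0) {γ : ℤ → ℤ → GWA k f → GWA k f}
    (hγ : IsSurjectiveZAlgebraEnd γ) :
    ∃ g h : ℤ → GWA k f, (∀ m, g m ∈ gwaComp k f 0) ∧ (∀ n, h n ∈ gwaComp k f 0) ∧
      ∀ m n, ∀ w ∈ gwaComp k f (n - m), γ m n w = g m * w * h n := by
  have hf₀ : f ≠ 0 := fun h => hf (by simp [h])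
  choose c hc using hγ.exists_map_eq_smul hf
  have hscalar (t : k) : algebraMap k (GWA k f) t ∈ gwaComp k f 0 :=
    mem_gwaComp_zero.2 ⟨C t, (aeval_C _ t).symm⟩
  refine ⟨fun m => algebraMap k _ (c m 0), fun n => algebraMap k _ (c 0 n),
    fun m => hscalar _, fun n => hscalar _, fun m n w hw => ?_⟩
  rw [hc m n w hw, hγ.eq_mul_of_map_eq_smul hf₀ hc m 0 n, mul_assoc, ← Algebra.commutes,
    ← Algebra.smul_def, ← Algebra.smul_def, smul_smul]

set_option maxHeartbeats 1000000 in
/-- Every degree-zero `ℤ`-algebra automorphism of the `ℤ`-algebra `Ā`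
associated to the generalized Weyl algebra `A(f)`, `f = z(z+α)` quadratic, is inner.
A degree-zero automorphism is given by a family `γ i j` of `k`-linear bijections of the
components `Ā_{i,j} = A_{j−i}` that is multiplicative and fixes the local units `1ᵢ`;
inner means there are `gₘ ∈ Ā_{m,m}` and `hₙ ∈ Ā_{n,n}` with `γ(w) = gₘ w hₙ` for all
`w ∈ Ā_{m,n}`. -/
theorem zAlgebra_automorphism_inner
    (k : Type) [Field k] [IsAlgClosed k] [CharZero k] (α : k)
    (γ : ℤ → ℤ → GWA k (X * (X + C α)) → GWA k (X * (X + C α)))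
    (hbij : ∀ i j : ℤ, Set.BijOn (γ i j)
      (gwaComp k (X * (X + C α)) (j - i)) (gwaComp k (X * (X + C α)) (j - i)))
    (hadd : ∀ i j : ℤ, ∀ w ∈ gwaComp k (X * (X + C α)) (j - i),
      ∀ v ∈ gwaComp k (X * (X + C α)) (j - i), γ i j (w + v) = γ i j w + γ i j v)
    (hsmul : ∀ i j : ℤ, ∀ w ∈ gwaComp k (X * (X + C α)) (j - i), ∀ t : k,
      γ i j (t • w) = t • γ i j w)
    (hmul : ∀ i j l : ℤ, ∀ w ∈ gwaComp k (X * (X + C α)) (j - i),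
      ∀ v ∈ gwaComp k (X * (X + C α)) (l - j), γ i l (w * v) = γ i j w * γ j l v)
    (hone : ∀ i : ℤ, γ i i 1 = 1) :
    ∃ g h : ℤ → GWA k (X * (X + C α)),
      (∀ m : ℤ, g m ∈ gwaComp k (X * (X + C α)) 0) ∧
      (∀ n : ℤ, h n ∈ gwaComp k (X * (X + C α)) 0) ∧
      ∀ m n : ℤ, ∀ w ∈ gwaComp k (X * (X + C α)) (n - m),
        γ m n w = g m * w * h n := by
  have hdeg : (X * (X + C α)).natDegree = 2 := by compute_degree!
  exact zAlgebra_automorphism_inner_general (by simp [hdeg])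
    ⟨fun i j => (hbij i j).mapsTo, fun i j => (hbij i j).surjOn, fun hw hv => hadd _ _ _ hw _ hv,
      fun hw => hsmul _ _ _ hw, fun hw hv => hmul _ _ _ _ hw _ hv, hone⟩

end
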